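/- Let T be a uni-trivalent tree and fix two distinct leaves v, w. Define u(T) recursively by the reduction of Lemma 2.3: if T is a single edge then u(T) = 1; otherwise pick any leaf x ∉ {v,w} with neighbor y and reduced tree T', and set u(T) = u(T') if y ∉ P(v,w) and u(T) = 2·u(T') if y ∈ P(v,w). Then u(T) = 2^{d(v,w)−1}, independently of all choices of reducing leaf. -/

import Mathlib

open scoped Classical

/-- A uni-trivalent tree (finite tree with all vertex degrees 1 or 3) with two marked
distinct leaves `v`, `w`. -/
structure MarkedUniTrivalentTree where
  /-- number of vertices -/
  n : ℕ
  /-- the underlying graph -/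
  G : SimpleGraph (Fin n)
  tree : G.IsTree
  deg : ∀ u : Fin n, G.degree u = 1 ∨ G.degree u = 3
  /-- first marked leaf -/
  v : Fin n
  /-- second marked leaf -/
  w : Fin n
  hv : G.degree v = 1
  hw : G.degree w = 1
  hvw : v ≠ w

/-- `T'` is the reduction of `T` at the auxiliary leaf `x ∉ {v, w}` with neighbor `y`:
delete `x` and `y` (and the edges incident to `y`) and join the other two neighbors
`s`, `t` of `y` by a new edge.  This is expressed via an injection `φ` of the vertices of
`T'` onto the vertices of `T` other than `x` and `y`, preserving the marked leaves. -/
def IsReduction (T : MarkedUniTrivalentTree) (x y : Fin T.n)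
    (T' : MarkedUniTrivalentTree) : Prop :=
  T.G.Adj x y ∧ T.G.degree x = 1 ∧ x ≠ T.v ∧ x ≠ T.w ∧
  ∃ φ : Fin T'.n → Fin T.n, Function.Injective φ ∧
    (∀ z : Fin T.n, (z ≠ x ∧ z ≠ y) ↔ z ∈ Set.range φ) ∧
    φ T'.v = T.v ∧ φ T'.w = T.w ∧
    ∃ s t : Fin T.n, s ≠ t ∧ T.G.Adj y s ∧ T.G.Adj y t ∧ s ≠ x ∧ t ≠ x ∧
      ∀ a b : Fin T'.n, T'.G.Adj a b ↔
        (T.G.Adj (φ a) (φ b) ∨ (φ a = s ∧ φ b = t) ∨ (φ a = t ∧ φ b = s))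

/-!
Removing an auxiliary leaf `x` and splicing out its neighbour `y` replaces the path `s – y – t` by
a single edge.  Conversely, every walk of the reduced tree lifts to the original one by inserting
`y` at each traversal of the new edge; a path traverses it at most once, so its lift is again a
path and is longer by one exactly when it passes through `y`.  As paths in a tree are geodesics,
`d(v, w)` drops by one when `y` lies on the `v`–`w` path and is unchanged otherwise, which matches
the two cases of the recursion.  The recursion reaches a single edge because a uni-trivalent tree
on `n` vertices has `n / 2 + 1` leaves, hence an auxiliary one as soon as `n > 2`.
-/

open SimpleGraph

section Splice

variable {V V' : Type*} {G : SimpleGraph V} {φ : V' ↪ V} {y : V} {s t a b : V'}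

/-- The graph on `V'` obtained from `G` by deleting the vertices outside the image of `φ` and
joining `s` and `t` by an edge.  When `φ s – y – φ t` is a path through a deleted vertex `y`, this
splices `y` out of that path. -/
def splice (G : SimpleGraph V) (φ : V' ↪ V) (s t : V') : SimpleGraph V' :=
  G.comap φ ⊔ edge s t

theorem splice_adj (hst : s ≠ t) :
    (splice G φ s t).Adj a b ↔
      G.Adj (φ a) (φ b) ∨ (a = s ∧ b = t) ∨ (a = t ∧ b = s) := by
  simp only [splice, sup_adj, comap_adj, edge_adj]
  grind

theorem isAcyclic_splice (hG : G.IsAcyclic) (hst : s ≠ t) (hy : y ∉ Set.range φ)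
    (hs : G.Adj y (φ s)) (ht : G.Adj y (φ t)) : (splice G φ s t).IsAcyclic := by
  refine (hG.of_comap φ).sup_edge_of_not_reachable fun hreach ↦ ?_
  obtain ⟨q, hq⟩ := hreach.exists_isPath
  let ψ : G.comap φ →g G := ⟨φ, id⟩
  let around : G.Path (φ s) (φ t) := ⟨q.map ψ, hq.map φ.injective⟩
  let through : G.Path (φ s) (φ t) :=
    ⟨.cons hs.symm (.cons ht .nil), by simp [hs.ne', ht.ne, hst]⟩
  have hmem : y ∈ around.1.support := by
    rw [(hG.subsingleton_path _ _).elim around through]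
    simp [through]
  rw [Walk.support_map, List.mem_map] at hmem
  obtain ⟨c, -, hc⟩ := hmem
  exact hy ⟨c, hc⟩

theorem reachable_of_forall_adj_reachable {H : SimpleGraph V'} {r : V → V'}
    (hadj : ∀ z z', G.Adj z z' → H.Reachable (r z) (r z')) {z z' : V} (h : G.Reachable z z') :
    H.Reachable (r z) (r z') := by
  obtain ⟨p⟩ := h
  induction p with
  | nil => rfl
  | cons h _ ih => exact (hadj _ _ h).trans ih

theorem connected_splice (hG : G.Connected)
    (hout : ∀ z ∉ Set.range φ, ∀ a, G.Adj z (φ a) → a = s ∨ a = t) :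
    (splice G φ s t).Connected := by
  -- Retract `V` onto `V'` by collapsing every deleted vertex to `s`.
  let r : V → V' := Function.extend φ id fun _ ↦ s
  have hr (c : V') : r (φ c) = c := φ.injective.extend_apply ..
  have hr' {z : V} (hz : z ∉ Set.range φ) : r z = s := Function.extend_apply' _ _ _ hz
  have hst : (splice G φ s t).Reachable s t := by
    obtain rfl | hne := eq_or_ne s t
    · rfl
    · exact ((splice_adj hne).2 (by simp)).reachable
  have hcross {z : V} {c : V'} (hz : z ∉ Set.range φ) (h : G.Adj z (φ c)) :
      (splice G φ s t).Reachable s c := by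
    obtain rfl | rfl := hout z hz c h
    · rfl
    · exact hst
  have hadj (z z' : V) (h : G.Adj z z') : (splice G φ s t).Reachable (r z) (r z') := by
    by_cases hz : z ∈ Set.range φ <;> by_cases hz' : z' ∈ Set.range φ
    · obtain ⟨⟨c, rfl⟩, ⟨c', rfl⟩⟩ := hz, hz'
      rw [hr, hr]
      exact Adj.reachable (Or.inl h)
    · obtain ⟨c, rfl⟩ := hz
      rw [hr, hr' hz']
      exact (hcross hz' h.symm).symm
    · obtain ⟨c', rfl⟩ := hz'
      rw [hr, hr' hz]
      exact hcross hz h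
    · rw [hr' hz, hr' hz']
  have : Nonempty V' := ⟨s⟩
  refine ⟨fun c c' ↦ ?_⟩
  simpa only [hr] using reachable_of_forall_adj_reachable hadj (hG (φ c) (φ c'))

theorem degree_splice [Fintype V] [Fintype V'] (hst : s ≠ t) (hy : y ∉ Set.range φ)
    (hnadj : ¬G.Adj (φ s) (φ t))
    (hout : ∀ z ∉ Set.range φ, ∀ a, G.Adj z (φ a) ↔ z = y ∧ (a = s ∨ a = t)) (a : V') :
    (splice G φ s t).degree a = G.degree (φ a) := by
  have hy' (c : V') : φ c ≠ y := fun h ↦ hy ⟨c, h⟩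
  have hnadj' : ¬G.Adj (φ t) (φ s) := fun h ↦ hnadj h.symm
  have hya : G.Adj (φ a) y ↔ a = s ∨ a = t := by
    rw [G.adj_comm, hout y hy, and_iff_right rfl]
  rw [← card_neighborFinset_eq_degree, ← card_neighborFinset_eq_degree]
  -- The new neighbour of `s` (resp. `t`) takes the place of `y`.
  refine Finset.card_bij (fun c _ ↦ if G.Adj (φ a) (φ c) then φ c else y) ?_ ?_ ?_
  · intro c hc
    rw [mem_neighborFinset, splice_adj hst] at hc
    rw [mem_neighborFinset]
    grind
  · intro c hc c' hc' h
    rw [mem_neighborFinset, splice_adj hst] at hc hc'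
    have := φ.injective.eq_iff (a := c) (b := c')
    grind
  · intro z hz
    rw [mem_neighborFinset] at hz
    simp only [mem_neighborFinset, splice_adj hst]
    by_cases hzφ : z ∈ Set.range φ
    · obtain ⟨c, rfl⟩ := hzφ
      exact ⟨c, Or.inl hz, if_pos hz⟩
    · obtain ⟨rfl, rfl | rfl⟩ := (hout z hzφ a).1 hz.symm
      · exact ⟨t, by simp, if_neg hnadj⟩
      · exact ⟨s, by simp, if_neg hnadj'⟩

theorem exists_walk_support_perm_of_splice [DecidableEq V'] (hs : G.Adj y (φ s))
    (ht : G.Adj y (φ t))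
    (q : (splice G φ s t).Walk a b) :
    ∃ p : G.Walk (φ a) (φ b),
      p.support.Perm (List.replicate (q.edges.count s(s, t)) y ++ q.support.map φ) := by
  induction q with
  | nil => exact ⟨.nil, by simp⟩
  | @cons a c b h q ih =>
    obtain ⟨p, hp⟩ := ih
    by_cases hnew : s(a, c) = s(s, t)
    · have ha : G.Adj (φ a) y ∧ G.Adj y (φ c) := by
        obtain ⟨rfl, rfl⟩ | ⟨rfl, rfl⟩ := Sym2.eq_iff.1 hnew
        exacts [⟨hs.symm, ht⟩, ⟨ht.symm, hs⟩]
      refine ⟨.cons ha.1 (.cons ha.2 p), ?_⟩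
      simp only [Walk.support_cons, Walk.edges_cons, hnew, List.count_cons_self,
        List.replicate_succ, List.map_cons, List.cons_append]
      exact ((hp.cons y).cons _).trans (List.perm_middle (l₁ := y :: _)).symm
    · have ha : G.Adj (φ a) (φ c) := by
        refine h.resolve_right fun he ↦ hnew ?_
        simpa using (edge_adj ..).1 he |>.1
      refine ⟨.cons ha p, ?_⟩
      simp only [Walk.support_cons, Walk.edges_cons, List.count_cons_of_ne hnew, List.map_cons]
      exact (hp.cons _).trans List.perm_middle.symm

theorem exists_isPath_length_eq_of_splice [DecidableEq V] (hy : y ∉ Set.range φ)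
    (hs : G.Adj y (φ s)) (ht : G.Adj y (φ t)) {q : (splice G φ s t).Walk a b} (hq : q.IsPath) :
    ∃ p : G.Walk (φ a) (φ b), p.IsPath ∧
      p.length = q.length + if y ∈ p.support then 1 else 0 := by
  obtain ⟨p, hp⟩ := exists_walk_support_perm_of_splice hs ht q
  have hcount : q.edges.count s(s, t) ≤ 1 := List.nodup_iff_count_le_one.1 hq.isTrail.edges_nodup _
  have hmap : (q.support.map φ).Nodup := hq.support_nodup.map φ.injective
  have hy' : y ∉ q.support.map φ := fun h ↦ hy ⟨_, (List.mem_map.1 h).choose_spec.2⟩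
  have hlen : p.length = q.length + q.edges.count s(s, t) := by
    have := hp.length_eq
    simp only [List.length_append, List.length_replicate, List.length_map,
      Walk.length_support] at this
    omega
  refine ⟨p, ?_, ?_⟩
  · rw [Walk.isPath_def, hp.nodup_iff, List.nodup_append']
    exact ⟨List.nodup_replicate.2 hcount, hmap, fun z hz ↦ List.eq_of_mem_replicate hz ▸ hy'⟩
  · have hmem : y ∈ p.support ↔ q.edges.count s(s, t) ≠ 0 := by
      rw [hp.mem_iff, List.mem_append, or_iff_left hy', List.mem_replicate, and_iff_left rfl]
    simp only [hlen, hmem]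
    split_ifs <;> omega

end Splice

section Tree

variable {V : Type*} {G : SimpleGraph V}

theorem isPath_unique_of_isAcyclic (hG : G.IsAcyclic) {a b : V} {p q : G.Walk a b} (hp : p.IsPath)
    (hq : q.IsPath) : p = q :=
  congrArg Subtype.val ((hG.subsingleton_path a b).elim ⟨p, hp⟩ ⟨q, hq⟩)

theorem length_eq_dist_of_isPath (hG : G.IsAcyclic) {a b : V} {p : G.Walk a b}
    (hp : p.IsPath) : p.length = G.dist a b := by
  obtain ⟨q, hq, hlen⟩ := p.reachable.exists_path_of_dist
  rw [isPath_unique_of_isAcyclic hG hp hq, hlen]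

theorem dist_eq_of_splice [DecidableEq V] {V' : Type*} {φ : V' ↪ V} {y : V} {s t a b : V'}
    (hG : G.IsAcyclic) (hab : (splice G φ s t).Reachable a b) (hy : y ∉ Set.range φ)
    (hs : G.Adj y (φ s)) (ht : G.Adj y (φ t)) {p : G.Walk (φ a) (φ b)} (hp : p.IsPath) :
    G.dist (φ a) (φ b) = (splice G φ s t).dist a b + if y ∈ p.support then 1 else 0 := by
  obtain ⟨q, hq, hlen⟩ := hab.exists_path_of_dist
  obtain ⟨p', hp', hlen'⟩ := exists_isPath_length_eq_of_splice hy hs ht hq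
  obtain rfl := isPath_unique_of_isAcyclic hG hp hp'
  rw [← length_eq_dist_of_isPath hG hp, hlen', hlen]

variable [Fintype V]

theorem two_mul_card_leaves (hG : G.IsTree) (hdeg : ∀ z, G.degree z = 1 ∨ G.degree z = 3) :
    2 * (Finset.univ.filter fun z ↦ G.degree z = 1).card = Fintype.card V + 2 := by
  have hsum : ∑ z, (G.degree z + if G.degree z = 1 then 2 else 0) = ∑ _z : V, 3 :=
    Finset.sum_congr rfl fun z _ ↦ by obtain h | h := hdeg z <;> simp [h]
  rw [Finset.sum_add_distrib, sum_degrees_eq_twice_card_edges, ← Finset.sum_filter,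
    Finset.sum_const, Finset.sum_const, Finset.card_univ] at hsum
  have hcard := hG.card_edgeFinset
  simp only [smul_eq_mul] at hsum
  omega

theorem degree_ne_one_of_adj_leaf (hG : G.Connected) {x y : V} (hx : G.degree x = 1)
    (hxy : G.Adj x y) (hV : ({x}ᶜ : Set V).Nontrivial) : G.degree y ≠ 1 := by
  intro hy
  have : Nontrivial ({x}ᶜ : Set V) := hV.coe_sort
  obtain ⟨⟨z, hzx⟩, hyz⟩ :=
    (hG.induce_compl_singleton_of_degree_eq_one hx).preconnected.exists_adj_of_nontrivial
      ⟨y, hxy.ne'⟩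
  exact hzx ((degree_eq_one_iff_existsUnique_adj.1 hy).unique hyz hxy.symm)

theorem exists_adj_iff_of_degree_eq_three {x y : V} (hy : G.degree y = 3) (hyx : G.Adj y x) :
    ∃ s t, s ≠ t ∧ s ≠ x ∧ t ≠ x ∧ ∀ z, G.Adj y z ↔ z = x ∨ z = s ∨ z = t := by
  have hx : x ∈ G.neighborFinset y := (G.mem_neighborFinset y x).2 hyx
  obtain ⟨s, t, hst, hpair⟩ := Finset.card_eq_two.1 <|
    show ((G.neighborFinset y).erase x).card = 2 by
      rw [Finset.card_erase_of_mem hx, card_neighborFinset_eq_degree, hy]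
  have hpair' (z : V) : z ≠ x ∧ G.Adj y z ↔ z = s ∨ z = t := by
    rw [← mem_neighborFinset, ← Finset.mem_erase, hpair, Finset.mem_insert, Finset.mem_singleton]
  refine ⟨s, t, hst, ((hpair' s).2 (.inl rfl)).1, ((hpair' t).2 (.inr rfl)).1, fun z ↦ ?_⟩
  rw [← hpair']
  by_cases hz : z = x
  · simp [hz, hyx]
  · simp [hz]

theorem exists_splice_isTree_degree_eq {V' : Type*} [Fintype V'] (hG : G.IsTree) {x y : V}
    (hx : G.degree x = 1) (hxy : G.Adj x y) (hy : G.degree y = 3) (φ : V' ↪ V)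
    (hφ : Set.range φ = {x, y}ᶜ) :
    ∃ s t : V', s ≠ t ∧ G.Adj y (φ s) ∧ G.Adj y (φ t) ∧ (splice G φ s t).IsTree ∧
      ∀ a, (splice G φ s t).degree a = G.degree (φ a) := by
  have hyφ : y ∉ Set.range φ := by simp [hφ]
  obtain ⟨s₀, t₀, hst₀, hsx, htx, hN⟩ := exists_adj_iff_of_degree_eq_three hy hxy.symm
  have hs₀ : G.Adj y s₀ := (hN s₀).2 (by simp)
  have ht₀ : G.Adj y t₀ := (hN t₀).2 (by simp)
  obtain ⟨s, rfl⟩ : s₀ ∈ Set.range φ := by simp [hφ, hsx, hs₀.ne']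
  obtain ⟨t, rfl⟩ : t₀ ∈ Set.range φ := by simp [hφ, htx, ht₀.ne']
  have hst : s ≠ t := fun h ↦ hst₀ (h ▸ rfl)
  have hne (a : V') : φ a ≠ x ∧ φ a ≠ y := by
    simpa [hφ] using Set.mem_range_self (f := φ) a
  have hout (z : V) (hz : z ∉ Set.range φ) (a : V') :
      G.Adj z (φ a) ↔ z = y ∧ (a = s ∨ a = t) := by
    obtain rfl | rfl : z = x ∨ z = y := by simpa [hφ, or_iff_not_imp_left] using hz
    · refine iff_of_false (fun h ↦ (hne a).2 ?_) fun h ↦ hxy.ne h.1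
      exact (degree_eq_one_iff_existsUnique_adj.1 hx).unique h hxy
    · simp [hN, (hne a).1]
  have hnadj : ¬G.Adj (φ s) (φ t) := fun h ↦
    hG.dist_ne_of_adj y h (by rw [dist_eq_one_iff_adj.2 hs₀, dist_eq_one_iff_adj.2 ht₀])
  exact ⟨s, t, hst, hs₀, ht₀,
    ⟨connected_splice hG.connected fun z hz a h ↦ ((hout z hz a).1 h).2,
      isAcyclic_splice hG.isAcyclic hst hyφ hs₀ ht₀⟩,
    degree_splice hst hyφ hnadj hout⟩

end Tree

namespace IsReduction

variable {T T' : MarkedUniTrivalentTree} {x y : Fin T.n}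

theorem n_lt (h : IsReduction T x y T') : T'.n < T.n := by
  obtain ⟨-, -, -, -, φ, hφ, hrange, -⟩ := h
  simpa using Fintype.card_lt_of_injective_of_notMem φ hφ fun hx ↦ ((hrange x).2 hx).1 rfl

theorem exists_eq_splice (h : IsReduction T x y T') :
    ∃ (φ : Fin T'.n ↪ Fin T.n) (s t : Fin T'.n), φ T'.v = T.v ∧ φ T'.w = T.w ∧
      y ∉ Set.range φ ∧ T.G.Adj y (φ s) ∧ T.G.Adj y (φ t) ∧ T'.G = splice T.G φ s t := by
  obtain ⟨-, -, -, -, φ, hφ, hrange, hv, hw, s, t, hst, hs, ht, hsx, htx, hadj⟩ := h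
  obtain ⟨s, rfl⟩ := (hrange s).1 ⟨hsx, hs.ne'⟩
  obtain ⟨t, rfl⟩ := (hrange t).1 ⟨htx, ht.ne'⟩
  refine ⟨⟨φ, hφ⟩, s, t, hv, hw, fun hy ↦ ((hrange y).2 hy).2 rfl, hs, ht, ?_⟩
  ext a b
  rw [hadj, splice_adj (hφ.ne_iff.1 hst)]
  simp only [hφ.eq_iff, Function.Embedding.coeFn_mk]

theorem dist_eq (h : IsReduction T x y T') {p : T.G.Walk T.v T.w} (hp : p.IsPath) :
    T.G.dist T.v T.w = T'.G.dist T'.v T'.w + if y ∈ p.support then 1 else 0 := by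
  obtain ⟨φ, s, t, hv, hw, hy, hs, ht, hG⟩ := h.exists_eq_splice
  have hreach := T'.tree.connected T'.v T'.w
  revert p
  rw [← hv, ← hw]
  rw [hG] at hreach ⊢
  exact fun hp ↦ dist_eq_of_splice T.tree.isAcyclic hreach hy hs ht hp

end IsReduction

namespace MarkedUniTrivalentTree

variable (T : MarkedUniTrivalentTree)

theorem dist_eq_one_of_card_edgeFinset_eq_one (hT : T.G.edgeFinset.card = 1) :
    T.G.dist T.v T.w = 1 := by
  obtain ⟨p, hp, hlen⟩ := T.tree.connected.exists_path_of_dist T.v T.w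
  have hlt := hp.length_lt
  have hcard := T.tree.card_edgeFinset
  have hpos := T.tree.connected.pos_dist_of_ne T.hvw
  omega

theorem exists_auxiliary_leaf (hT : T.G.edgeFinset.card ≠ 1) :
    ∃ x, T.G.degree x = 1 ∧ x ≠ T.v ∧ x ≠ T.w := by
  have hleaves := two_mul_card_leaves T.tree T.deg
  have hcard := T.tree.card_edgeFinset
  have hpair : ({T.v, T.w} : Finset (Fin T.n)).card = 2 := Finset.card_pair T.hvw
  have hle := Finset.card_le_univ ({T.v, T.w} : Finset (Fin T.n))
  obtain ⟨x, hx, hxvw⟩ := Finset.exists_mem_notMem_of_card_lt_card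
    (show ({T.v, T.w} : Finset (Fin T.n)).card <
      (Finset.univ.filter fun z ↦ T.G.degree z = 1).card by omega)
  exact ⟨x, by simpa using hx, by simpa using hxvw⟩

theorem exists_isReduction {x : Fin T.n} (hx : T.G.degree x = 1) (hxv : x ≠ T.v)
    (hxw : x ≠ T.w) : ∃ y T', IsReduction T x y T' := by
  obtain ⟨y, hxy, -⟩ := degree_eq_one_iff_existsUnique_adj.1 hx
  have hy : T.G.degree y = 3 := (T.deg y).resolve_left <|
    degree_ne_one_of_adj_leaf T.tree.connected hx hxy ⟨T.v, hxv.symm, T.w, hxw.symm, T.hvw⟩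
  have hyv : y ≠ T.v := by rintro rfl; simp [T.hv] at hy
  have hyw : y ≠ T.w := by rintro rfl; simp [T.hw] at hy
  let φ : Fin ({x, y}ᶜ : Finset (Fin T.n)).card ↪ Fin T.n :=
    (Finset.orderEmbOfFin _ rfl).toEmbedding
  have hφ : Set.range φ = {x, y}ᶜ := by simp [φ, Set.ext_iff, and_comm]
  obtain ⟨s, t, hst, hs, ht, htree, hdeg⟩ := exists_splice_isTree_degree_eq T.tree hx hxy hy φ hφ
  have hrange (z : Fin T.n) : z ≠ x ∧ z ≠ y ↔ z ∈ Set.range φ := by simp [hφ]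
  obtain ⟨v', hv'⟩ := (hrange T.v).1 ⟨hxv.symm, hyv.symm⟩
  obtain ⟨w', hw'⟩ := (hrange T.w).1 ⟨hxw.symm, hyw.symm⟩
  let T' : MarkedUniTrivalentTree :=
    { n := _
      G := splice T.G φ s t
      tree := htree
      deg := fun a ↦ hdeg a ▸ T.deg (φ a)
      v := v'
      w := w'
      hv := by rw [hdeg, hv', T.hv]
      hw := by rw [hdeg, hw', T.hw]
      hvw := by rintro rfl; exact T.hvw (hv'.symm.trans hw') }
  refine ⟨y, T', hxy, hx, hxv, hxw, φ, φ.injective, hrange, hv', hw', φ s, φ t,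
    φ.injective.ne hst, hs, ht, ((hrange _).2 ⟨s, rfl⟩).1, ((hrange _).2 ⟨t, rfl⟩).1,
    fun a b ↦ ?_⟩
  simpa only [φ.injective.eq_iff] using splice_adj hst

theorem reduction_induction {P : MarkedUniTrivalentTree → Prop}
    (edge : ∀ T, T.G.edgeFinset.card = 1 → P T)
    (reduce : ∀ T x y T', IsReduction T x y T' → P T' → P T) : P T := by
  induction hn : T.n using Nat.strong_induction_on generalizing T with
  | _ n ih =>
    by_cases hT : T.G.edgeFinset.card = 1
    · exact edge T hT
    · obtain ⟨x, hx, hxv, hxw⟩ := T.exists_auxiliary_leaf hT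
      obtain ⟨y, T', h⟩ := T.exists_isReduction hx hxv hxw
      exact reduce T x y T' h (ih T'.n (hn ▸ h.n_lt) T' rfl)

end MarkedUniTrivalentTree

theorem stmt12_general {M : Type*} [Monoid M] (c : M) (u : MarkedUniTrivalentTree → M)
    (hbase : ∀ T : MarkedUniTrivalentTree, T.G.edgeFinset.card = 1 → u T = 1)
    (hoff : ∀ (T : MarkedUniTrivalentTree) (x y : Fin T.n) (T' : MarkedUniTrivalentTree),
      IsReduction T x y T' → (∃ p : T.G.Walk T.v T.w, p.IsPath ∧ y ∉ p.support) →
      u T = u T')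
    (hon : ∀ (T : MarkedUniTrivalentTree) (x y : Fin T.n) (T' : MarkedUniTrivalentTree),
      IsReduction T x y T' → (∀ p : T.G.Walk T.v T.w, p.IsPath → y ∈ p.support) →
      u T = c * u T') (T : MarkedUniTrivalentTree) :
    u T = c ^ (T.G.dist T.v T.w - 1) := by
  induction T using MarkedUniTrivalentTree.reduction_induction with
  | edge T hT => simp [hbase T hT, T.dist_eq_one_of_card_edgeFinset_eq_one hT]
  | reduce T x y T' h ih =>
    obtain ⟨p, hp, hunique⟩ := T.tree.existsUnique_path T.v T.w
    have hdist := h.dist_eq hp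
    by_cases hy : y ∈ p.support
    · rw [if_pos hy] at hdist
      have hpos := T'.tree.connected.pos_dist_of_ne T'.hvw
      rw [hon T x y T' h fun p' hp' ↦ hunique p' hp' ▸ hy, ih, ← pow_succ', hdist,
        Nat.sub_add_cancel hpos, Nat.add_sub_cancel]
    · rw [if_neg hy, add_zero] at hdist
      rw [hoff T x y T' h ⟨p, hp, hy⟩, ih, hdist]

/-- If `u` satisfies the recursion of Lemma 2.3 — `u = 1` on a single edge, and for any
reduction at an auxiliary leaf `x` with neighbor `y`, `u T = u T'` when `y` is off the
`v`–`w` path and `u T = 2 · u T'` when `y` is on it — then `u T = 2 ^ (d(v,w) - 1)`,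
independently of all choices of reducing leaf. -/
theorem stmt12 (u : MarkedUniTrivalentTree → ℕ)
    (hbase : ∀ T : MarkedUniTrivalentTree, T.G.edgeFinset.card = 1 → u T = 1)
    (hoff : ∀ (T : MarkedUniTrivalentTree) (x y : Fin T.n) (T' : MarkedUniTrivalentTree),
      IsReduction T x y T' → (∃ p : T.G.Walk T.v T.w, p.IsPath ∧ y ∉ p.support) →
      u T = u T')
    (hon : ∀ (T : MarkedUniTrivalentTree) (x y : Fin T.n) (T' : MarkedUniTrivalentTree),
      IsReduction T x y T' → (∀ p : T.G.Walk T.v T.w, p.IsPath → y ∈ p.support) →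
      u T = 2 * u T') :
    ∀ T : MarkedUniTrivalentTree, u T = 2 ^ (T.G.dist T.v T.w - 1) :=
  stmt12_general 2 u hbase hoff hon
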